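/- For every m ≥ 7 and every e ∈ {0, 1}, in the presented group M(m, e) the subgroup Subgroup.closure {σ₀, σ₁} is isomorphic to DihedralGroup 4 (order 8) and the subgroup Subgroup.closure {σ₁, σ₂} is isomorphic to DihedralGroup (2^(m−3)) (order 2^(m−2)). In particular, every element of Subgroup.closure {σ₀, σ₁} can be written as (σ₀σ₁)^(x₁)·σ₁^(x₂) with 0 ≤ x₁ ≤ 3, x₂ ∈ {0, 1}, and every element of Subgroup.closure {σ₁, σ₂} can be written as (σ₁σ₂)^(x₃)·σ₁^(x₄) with 0 ≤ x₃ ≤ 2^(m−3) − 1, x₄ ∈ {0, 1}. -/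

import Mathlib

/-!
Each of the two subgroups is generated by a rotation `a` (the product of the two involutions) and
a reflection `b` inverting it, so it is dihedral as soon as `a` has the expected order, which is at
least `3` (`dihedral_of_rotation_reflection`).  The defining relations bound the orders of `σ₀σ₁`
and `σ₁σ₂` by `4` and `n = 2^(m-3)`.

For the lower bounds, `M(m, e)` acts on `Bool × Bool × ZMod n`.  Put `h = e * n / 2 ∈ ZMod n`,
so that `2h = 0`, and let
* `x₀ : (p, q, k) ↦ (¬p, q, k)`,
* `x₁ : (p, q, k) ↦ (q, p, -k)`,
* `x₂ : (p, q, k) ↦ (p, q, 1 - k + [q] h)`.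

Then `(x₀x₁x₂x₁)²` translates `k` by `h`, while `(x₂x₁)⁴` translates `k` by `4`; as `4 ∣ n / 2`,
the element `(x₂x₁)^(e n / 2)` is also the translation by `h`, and the last relation follows from
`2h = 0`.  In this action `x₀x₁` has order `4`, and `x₁x₂` maps `(false, false, k)` to
`(false, false, k - 1)`, so its order is a multiple of `n`.
-/

/-- The relation set of the presented group `M(m, e)` on generators
`x₀, x₁, x₂`: relations `x₀², x₁², x₂², (x₀x₁)⁴, (x₀x₂)², (x₁x₂)^(2^(m-3))`,
and `(x₀x₁x₂x₁)² · (x₂x₁)^(2^(m-4)·e)`. -/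
def Mrels (m e : ℕ) : Set (FreeGroup (Fin 3)) :=
  {(FreeGroup.of 0) ^ 2, (FreeGroup.of 1) ^ 2, (FreeGroup.of 2) ^ 2,
    (FreeGroup.of 0 * FreeGroup.of 1) ^ 4,
    (FreeGroup.of 0 * FreeGroup.of 2) ^ 2,
    (FreeGroup.of 1 * FreeGroup.of 2) ^ (2 ^ (m - 3)),
    (FreeGroup.of 0 * FreeGroup.of 1 * FreeGroup.of 2 * FreeGroup.of 1) ^ 2 *
      (FreeGroup.of 2 * FreeGroup.of 1) ^ (2 ^ (m - 4) * e)}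

/-- The presented group `M(m, e)`. -/
abbrev Mgrp (m e : ℕ) : Type := PresentedGroup (Mrels m e)

/-- `σ i`: the image in `M(m, e)` of the generator `xᵢ`. -/
def Msigma (m e : ℕ) (i : Fin 3) : Mgrp m e := PresentedGroup.of i

/-! ### Recognizing dihedral groups -/

/-- If `b` is an involution inverting `a`, and `a` has order `n ≥ 3`, then `⟨a, b⟩` is dihedral of
order `2n`, and its elements have the normal form `a ^ x * b ^ y`. -/
theorem dihedral_of_rotation_reflection {G : Type*} [Group G] {a b : G} {n : ℕ}
    (hn : 3 ≤ n) (hb : b * b = 1) (hab : b * a * b = a⁻¹) (ha : orderOf a = n) :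
    Nonempty ((Subgroup.closure {a, b} : Subgroup G) ≃* DihedralGroup n) ∧
    ∀ g ∈ Subgroup.closure {a, b}, ∃ x y : ℕ, x ≤ n - 1 ∧ y ≤ 1 ∧ g = a ^ x * b ^ y := by
  have : NeZero n := ⟨by omega⟩
  have hbi : b⁻¹ = b := inv_eq_of_mul_eq_one_left hb
  let P : ZMod n → G := fun i => a ^ i.val
  have hadd : ∀ i j, P (i + j) = P i * P j := by
    intro i j
    simp only [P]
    rw [ZMod.val_add, ← pow_add, pow_eq_pow_iff_modEq, ha]
    exact Nat.mod_modEq _ _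
  have h0 : P 0 = 1 := by simp [P]
  have hneg : ∀ i, P (-i) = (P i)⁻¹ := by
    intro i
    apply eq_inv_of_mul_eq_one_left
    rw [← hadd, neg_add_cancel, h0]
  have hsub : ∀ i j, P (i - j) = (P j)⁻¹ * P i := by
    intro i j
    rw [sub_eq_neg_add, hadd, hneg]
  have hconj : ∀ i, P i * b = b * (P i)⁻¹ := by
    intro i
    have h1 : b * P i * b⁻¹ = (P i)⁻¹ := by
      simp only [P]
      rw [← conj_pow, hbi, hab, inv_pow]
    rw [← h1, ← mul_assoc, ← mul_assoc, hb, one_mul, hbi]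
  let f : DihedralGroup n →* G :=
    { toFun := fun x => match x with
        | DihedralGroup.r i => P i
        | DihedralGroup.sr i => b * P i
      map_one' := h0
      map_mul' := by
        rintro (i | i) (j | j)
        · exact hadd i j
        · change b * P (j - i) = P i * (b * P j)
          rw [hsub, ← mul_assoc, ← mul_assoc, hconj]
        · change b * P (i + j) = b * P i * P j
          rw [hadd, mul_assoc]
        · change P (j - i) = b * P i * (b * P j)
          rw [hsub, mul_assoc b, ← mul_assoc (P i), hconj, ← mul_assoc, ← mul_assoc, hb, one_mul] }
  have hinj : Function.Injective f := by
    rw [injective_iff_map_eq_one]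
    rintro (i | i) hi
    · change a ^ i.val = 1 at hi
      have h1 := orderOf_dvd_of_pow_eq_one hi
      rw [ha] at h1
      have h2 : i.val = 0 := Nat.eq_zero_of_dvd_of_lt h1 (ZMod.val_lt i)
      rw [(ZMod.val_eq_zero i).1 h2, DihedralGroup.one_def]
    · -- Here `b` would be a power of `a`, hence commute with it, which forces `a ^ 2 = 1`.
      exfalso
      change b * a ^ i.val = 1 at hi
      have h1 : b = (a ^ i.val)⁻¹ := eq_inv_of_mul_eq_one_left hi
      have h2 : Commute b a := by
        rw [h1]
        exact ((Commute.refl a).pow_left _).inv_left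
      rw [h2.eq, mul_assoc, hb, mul_one] at hab
      have h3 : a ^ 2 = 1 := by
        rw [pow_two]
        nth_rewrite 1 [hab]
        exact inv_mul_cancel a
      have h4 := Nat.le_of_dvd (by norm_num) (orderOf_dvd_of_pow_eq_one h3)
      omega
  have hrange : f.range = Subgroup.closure {a, b} := by
    have hac : a ∈ Subgroup.closure {a, b} := Subgroup.subset_closure (by simp)
    have hbc : b ∈ Subgroup.closure {a, b} := Subgroup.subset_closure (by simp)
    apply le_antisymm
    · rintro _ ⟨(i | i), rfl⟩
      · exact pow_mem hac _
      · exact mul_mem hbc (pow_mem hac _)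
    · rw [Subgroup.closure_le]
      rintro x (rfl | rfl)
      · refine ⟨DihedralGroup.r 1, ?_⟩
        change x ^ (1 : ZMod n).val = x
        rw [ZMod.val_one'' (by omega), pow_one]
      · refine ⟨DihedralGroup.sr 0, ?_⟩
        change x * P 0 = x
        rw [h0, mul_one]
  refine ⟨⟨((MonoidHom.ofInjective hinj).trans (MulEquiv.subgroupCongr hrange)).symm⟩, ?_⟩
  intro g hg
  rw [← hrange] at hg
  have hlt : ∀ i : ZMod n, i.val ≤ n - 1 := fun i => by
    have := ZMod.val_lt i
    omega
  obtain ⟨(i | i), rfl⟩ := hg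
  · exact ⟨i.val, 0, hlt i, by norm_num, by rw [pow_zero, mul_one]; rfl⟩
  · refine ⟨(-i).val, 1, hlt _, le_rfl, ?_⟩
    change b * P i = P (-i) * b ^ 1
    rw [pow_one, hconj, hneg, inv_inv]

/-! ### The action on `Bool × Bool × ZMod n` -/

/-- The action of `x₀` on `Bool × Bool × ZMod n`. -/
def actX0 (n : ℕ) : Equiv.Perm (Bool × Bool × ZMod n) :=
  Function.Involutive.toPerm (fun x => (!x.1, x.2.1, x.2.2)) (fun x => by simp)

/-- The action of `x₁` on `Bool × Bool × ZMod n`. -/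
def actX1 (n : ℕ) : Equiv.Perm (Bool × Bool × ZMod n) :=
  Function.Involutive.toPerm (fun x => (x.2.1, x.1, -x.2.2)) (fun x => by simp)

/-- The action of `x₂` on `Bool × Bool × ZMod n`, for an arbitrary offset `h`. -/
def actX2 (n : ℕ) (h : ZMod n) : Equiv.Perm (Bool × Bool × ZMod n) :=
  Function.Involutive.toPerm
    (fun x => (x.1, x.2.1, 1 - x.2.2 + if x.2.1 then h else 0)) (fun x => by
      obtain ⟨p, q, k⟩ := x
      cases q <;> simp <;> ring)

@[simp] theorem actX0_apply (n : ℕ) (p q : Bool) (k : ZMod n) :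
    actX0 n (p, q, k) = (!p, q, k) := rfl

@[simp] theorem actX1_apply (n : ℕ) (p q : Bool) (k : ZMod n) :
    actX1 n (p, q, k) = (q, p, -k) := rfl

@[simp] theorem actX2_apply (n : ℕ) (h : ZMod n) (p q : Bool) (k : ZMod n) :
    actX2 n h (p, q, k) = (p, q, 1 - k + if q then h else 0) := rfl

/-- As `(x₂x₁)⁴` translates the last coordinate by `4` (the contributions of `h` cancel in pairs),
`(x₂x₁)^(4j)` translates it by `4j`. -/
theorem act21_pow (n : ℕ) (h : ZMod n) (hh : h + h = 0) (j : ℕ) (p q : Bool) (k : ZMod n) :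
    ((actX2 n h * actX1 n) ^ (4 * j)) (p, q, k) = (p, q, k + ((4 * j : ℕ) : ZMod n)) := by
  rw [pow_mul]
  induction j generalizing k with
  | zero => simp
  | succ j ih =>
    rw [pow_succ, Equiv.Perm.mul_apply]
    have h4 : ((actX2 n h * actX1 n) ^ 4) (p, q, k) = (p, q, k + 4) := by
      simp only [pow_succ, pow_zero, one_mul, Equiv.Perm.mul_apply, actX1_apply, actX2_apply,
        Prod.mk.injEq, true_and]
      cases p <;> cases q <;> simp <;>
        first | ring1 | linear_combination hh | linear_combination 2 * hh
    rw [h4, ih]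
    push_cast
    congr 2
    ring

/-- On the points `(false, false, k)` the element `x₁x₂` acts as translation by `-1`. -/
theorem act12_pow (n : ℕ) (h : ZMod n) (j : ℕ) (k : ZMod n) :
    ((actX1 n * actX2 n h) ^ j) (false, false, k) = (false, false, k - (j : ZMod n)) := by
  induction j generalizing k with
  | zero => simp
  | succ j ih =>
    rw [pow_succ, Equiv.Perm.mul_apply, Equiv.Perm.mul_apply, actX2_apply, actX1_apply, ih]
    push_cast
    congr 2
    simp
    ring

/-- The action of the three generators of `M(m, e)`, with offset `h = 2^(m-4) e`. -/
def actGen (m e : ℕ) : Fin 3 → Equiv.Perm (Bool × Bool × ZMod (2 ^ (m - 3))) :=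
  ![actX0 _, actX1 _, actX2 _ ((2 ^ (m - 4) * e : ℕ) : ZMod (2 ^ (m - 3)))]

theorem half_add_half (m e : ℕ) (hm : 7 ≤ m) :
    ((2 ^ (m - 4) * e : ℕ) : ZMod (2 ^ (m - 3))) + ((2 ^ (m - 4) * e : ℕ) : ZMod (2 ^ (m - 3)))
      = 0 := by
  rw [← Nat.cast_add, ZMod.natCast_eq_zero_iff]
  refine ⟨e, ?_⟩
  rw [show m - 3 = (m - 4) + 1 by omega, pow_succ]
  ring

theorem actGen_rels (m e : ℕ) (hm : 7 ≤ m) :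
    ∀ r ∈ Mrels m e, FreeGroup.lift (actGen m e) r = 1 := by
  have hh := half_add_half m e hm
  have e4 : 2 ^ (m - 4) * e = 4 * (2 ^ (m - 6) * e) := by
    rw [show m - 4 = (m - 6) + 2 by omega, pow_add]
    ring
  have e3 : 2 ^ (m - 3) = 4 * 2 ^ (m - 5) := by
    rw [show m - 3 = (m - 5) + 2 by omega, pow_add]
    ring
  have g0 : actGen m e 0 = actX0 _ := rfl
  have g1 : actGen m e 1 = actX1 _ := rfl
  have g2 : actGen m e 2 = actX2 _ ((2 ^ (m - 4) * e : ℕ) : ZMod (2 ^ (m - 3))) := rfl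
  rintro r (rfl | rfl | rfl | rfl | rfl | rfl | rfl) <;>
    simp only [map_mul, map_pow, FreeGroup.lift_apply_of, g0, g1, g2]
  · ext1 ⟨p, q, k⟩
    simp [pow_two]
  · ext1 ⟨p, q, k⟩
    simp [pow_two]
  · ext1 ⟨p, q, k⟩
    cases q <;> simp [pow_two] <;> ring
  · ext1 ⟨p, q, k⟩
    simp [pow_succ]
  · ext1 ⟨p, q, k⟩
    cases q <;> simp [pow_two] <;> ring
  · -- `x₁x₂` is inverse to `x₂x₁`, whose powers are known.
    have hinv : actX1 (2 ^ (m - 3)) * actX2 _ ((2 ^ (m - 4) * e : ℕ) : ZMod (2 ^ (m - 3)))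
        = (actX2 _ ((2 ^ (m - 4) * e : ℕ) : ZMod (2 ^ (m - 3))) * actX1 _)⁻¹ := by
      rw [mul_inv_rev]
      rfl
    rw [hinv, inv_pow, inv_eq_one]
    ext1 ⟨p, q, k⟩
    have h1 := act21_pow _ _ hh (2 ^ (m - 5)) p q k
    rw [← e3, ZMod.natCast_self, add_zero] at h1
    exact h1
  · ext1 ⟨p, q, k⟩
    have h1 := act21_pow _ _ hh (2 ^ (m - 6) * e) p q k
    rw [← e4] at h1
    rw [Equiv.Perm.mul_apply, h1]
    generalize ((2 ^ (m - 4) * e : ℕ) : ZMod (2 ^ (m - 3))) = h at hh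
    simp only [pow_two, Equiv.Perm.mul_apply, actX0_apply, actX1_apply, actX2_apply,
      Equiv.Perm.one_apply, Prod.mk.injEq, Bool.not_not, true_and]
    cases p <;> simp <;> first | ring1 | linear_combination hh

/-! ### Orders and generators in `M(m, e)` -/

theorem closure_pair_mul_left {G : Type*} [Group G] (s t : G) :
    Subgroup.closure {s * t, s} = Subgroup.closure {s, t} := by
  apply le_antisymm <;> rw [Subgroup.closure_le]
  · have hs : s ∈ Subgroup.closure {s, t} := Subgroup.subset_closure (by simp)
    have ht : t ∈ Subgroup.closure {s, t} := Subgroup.subset_closure (by simp)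
    rintro x (rfl | rfl)
    · exact mul_mem hs ht
    · exact hs
  · have hs : s ∈ Subgroup.closure {s * t, s} := Subgroup.subset_closure (by simp)
    have hst : s * t ∈ Subgroup.closure {s * t, s} := Subgroup.subset_closure (by simp)
    rintro x (rfl | rfl)
    · exact hs
    · exact (Subgroup.mul_mem_cancel_left _ hs).1 hst

theorem closure_pair_mul_right {G : Type*} [Group G] (s t : G) :
    Subgroup.closure {s * t, t} = Subgroup.closure {s, t} := by
  apply le_antisymm <;> rw [Subgroup.closure_le]
  · have hs : s ∈ Subgroup.closure {s, t} := Subgroup.subset_closure (by simp)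
    have ht : t ∈ Subgroup.closure {s, t} := Subgroup.subset_closure (by simp)
    rintro x (rfl | rfl)
    · exact mul_mem hs ht
    · exact ht
  · have ht : t ∈ Subgroup.closure {s * t, t} := Subgroup.subset_closure (by simp)
    have hst : s * t ∈ Subgroup.closure {s * t, t} := Subgroup.subset_closure (by simp)
    rintro x (rfl | rfl)
    · exact (Subgroup.mul_mem_cancel_right _ ht).1 hst
    · exact ht

theorem Msigma_mul_self (m e : ℕ) (i : Fin 3) : Msigma m e i * Msigma m e i = 1 := by
  have h : (FreeGroup.of i) ^ 2 ∈ Mrels m e := by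
    fin_cases i <;> simp [Mrels]
  have := PresentedGroup.one_of_mem h
  rw [map_pow, pow_two] at this
  exact this

theorem orderOf_sigma01 (m e : ℕ) (hm : 7 ≤ m) :
    orderOf (Msigma m e 0 * Msigma m e 1) = 4 := by
  have h : (FreeGroup.of 0 * FreeGroup.of 1) ^ 4 ∈ Mrels m e := by simp [Mrels]
  have h4 : (Msigma m e 0 * Msigma m e 1) ^ (2 ^ (1 + 1)) = 1 := by
    have := PresentedGroup.one_of_mem h
    rw [map_pow, map_mul] at this
    exact this
  refine orderOf_eq_prime_pow (p := 2) (n := 1) (fun h2 => ?_) h4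
  have h5 := congrArg (PresentedGroup.toGroup (actGen_rels m e hm)) h2
  rw [map_pow, map_mul, map_one, Msigma, Msigma, PresentedGroup.toGroup.of,
    PresentedGroup.toGroup.of] at h5
  have h6 : ((actX0 (2 ^ (m - 3)) * actX1 (2 ^ (m - 3))) ^ (2 ^ 1)) (false, false, 0)
      = (false, false, 0) := congrArg (fun σ => σ (false, false, 0)) h5
  simp [pow_two] at h6

theorem orderOf_sigma12 (m e : ℕ) (hm : 7 ≤ m) :
    orderOf (Msigma m e 1 * Msigma m e 2) = 2 ^ (m - 3) := by
  have h : (FreeGroup.of 1 * FreeGroup.of 2) ^ (2 ^ (m - 3)) ∈ Mrels m e := by simp [Mrels]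
  apply Nat.dvd_antisymm
  · apply orderOf_dvd_of_pow_eq_one
    have := PresentedGroup.one_of_mem h
    rw [map_pow, map_mul] at this
    exact this
  · have h5 := congrArg (PresentedGroup.toGroup (actGen_rels m e hm))
      (pow_orderOf_eq_one (Msigma m e 1 * Msigma m e 2))
    rw [map_pow, map_mul, map_one] at h5
    nth_rewrite 1 [Msigma, Msigma] at h5
    rw [PresentedGroup.toGroup.of, PresentedGroup.toGroup.of] at h5
    have h6 := (act12_pow _ _ _ _).symm.trans
      (congrArg (fun σ => σ (false, false, 0)) h5)
    simpa [ZMod.natCast_eq_zero_iff] using h6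

/-- For m ≥ 7 and e ∈ {0, 1}, in M(m, e) the subgroup ⟨σ₀, σ₁⟩ is
dihedral of order 8 and ⟨σ₁, σ₂⟩ is dihedral of order 2^(m-2); every element of
⟨σ₀, σ₁⟩ is (σ₀σ₁)^{x₁}σ₁^{x₂} with x₁ ≤ 3, x₂ ≤ 1, and every element of
⟨σ₁, σ₂⟩ is (σ₁σ₂)^{x₃}σ₁^{x₄} with x₃ ≤ 2^(m-3) - 1, x₄ ≤ 1. -/
theorem stmt_11 (m e : ℕ) (hm : 7 ≤ m) (he : e ≤ 1) :
    Nonempty ((Subgroup.closure {Msigma m e 0, Msigma m e 1} : Subgroup (Mgrp m e))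
        ≃* DihedralGroup 4) ∧
    Nonempty ((Subgroup.closure {Msigma m e 1, Msigma m e 2} : Subgroup (Mgrp m e))
        ≃* DihedralGroup (2 ^ (m - 3))) ∧
    (∀ g ∈ Subgroup.closure {Msigma m e 0, Msigma m e 1},
      ∃ x₁ x₂ : ℕ, x₁ ≤ 3 ∧ x₂ ≤ 1 ∧
        g = (Msigma m e 0 * Msigma m e 1) ^ x₁ * (Msigma m e 1) ^ x₂) ∧
    (∀ g ∈ Subgroup.closure {Msigma m e 1, Msigma m e 2},
      ∃ x₃ x₄ : ℕ, x₃ ≤ 2 ^ (m - 3) - 1 ∧ x₄ ≤ 1 ∧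
        g = (Msigma m e 1 * Msigma m e 2) ^ x₃ * (Msigma m e 1) ^ x₄) := by
  have s0 := Msigma_mul_self m e 0
  have s1 := Msigma_mul_self m e 1
  have s2 := Msigma_mul_self m e 2
  have i0 := inv_eq_of_mul_eq_one_left s0
  have i1 := inv_eq_of_mul_eq_one_left s1
  have i2 := inv_eq_of_mul_eq_one_left s2
  have hn : 3 ≤ 2 ^ (m - 3) := by
    calc 3 ≤ 2 ^ 4 := by norm_num
      _ ≤ 2 ^ (m - 3) := Nat.pow_le_pow_right (by norm_num) (by omega)
  obtain ⟨A, A'⟩ := dihedral_of_rotation_reflection (by norm_num) s1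
    (by rw [mul_inv_rev, i0, i1, mul_assoc, mul_assoc, s1, mul_one]) (orderOf_sigma01 m e hm)
  obtain ⟨B, B'⟩ := dihedral_of_rotation_reflection hn s1
    (by rw [mul_inv_rev, i1, i2, ← mul_assoc, s1, one_mul]) (orderOf_sigma12 m e hm)
  rw [closure_pair_mul_right] at A A'
  rw [closure_pair_mul_left] at B B'
  exact ⟨A, B, A', B'⟩
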